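/- Let ã : ℤ^d × ℝ^d → ℝ with each ã_η := ã(η,·) ∈ C^∞(ℝ^d), satisfying for every x ∈ ℝ^d: ã_η(x) ≤ 0 for η ≠ 0, ã_η(x) = ã_{−η}(x), and span{η : ã_η(x) < 0} = ℝ^d; and assume for every c > 0, every compact K ⊂ ℝ^d and every multi-index β that Σ_{η∈ℤ^d} e^{c|η|} sup_{x∈K} |∂_x^β ã_η(x)| < ∞. Let V₀ ∈ C^∞(ℝ^d, ℝ). Then h̃₀(x,ξ) := −Σ_{η∈ℤ^d} ã_η(x) cosh(η·ξ) − V₀(x) is a smooth function on ℝ^{2d} which is even and strictly convex in ξ for each x, and h̃₀ is hyperregular: the fibre derivative (x,ξ) ↦ (x, ∇_ξ h̃₀(x,ξ)) is a C^∞ diffeomorphism of ℝ^{2d}. -/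

import Mathlib

open scoped RealInnerProductSpace Classical
noncomputable section

/-- `ℝ^d` as a Euclidean space. -/
abbrev Ed (d : ℕ) := EuclideanSpace ℝ (Fin d)

/-- The lattice vector `η ∈ ℤ^d` regarded as a vector of `ℝ^d`. -/
def zv {d : ℕ} (η : Fin d → ℤ) : Ed d :=
  (EuclideanSpace.equiv (Fin d) ℝ).symm (fun i => (η i : ℝ))

/-!
Since `cosh` is strongly convex on `ℝ`, a combination `∑ αᵢ cosh ⟪zᵢ, ξ⟫` is strongly convex as
soon as the quadratic form `∑ αᵢ ⟪zᵢ, v⟫²` is coercive, and the spanning condition makes this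
continuous form positive on the unit sphere. Strong convexity of the fibres gives a coercive second
derivative and an antilipschitz gradient. By Lax–Milgram the derivative of the fibre derivative,
which is block triangular, is invertible, so the fibre derivative is an open map with smooth local
inverses. Each fibre gradient is injective with closed and open range, hence bijective.
-/

open Set Filter Topology
open scoped ContDiff Gradient Nat

section Series

variable {ι 𝕜 E F : Type*} [RCLike 𝕜] [NormedAddCommGroup E] [NormedSpace 𝕜 E]
  [NormedAddCommGroup F] [NormedSpace 𝕜 F] [CompleteSpace F]

theorem continuous_tsum_of_eventually_nhds {β : Type*} [TopologicalSpace β] {f : ι → β → F}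
    (hf : ∀ i, Continuous (f i))
    (hfu : ∀ x, ∃ u : ι → ℝ, Summable u ∧ ∀ᶠ y in 𝓝 x, ∀ i, ‖f i y‖ ≤ u i) :
    Continuous fun x ↦ ∑' i, f i x := by
  refine continuous_iff_continuousAt.2 fun x ↦ ?_
  obtain ⟨u, hu, hfu⟩ := hfu x
  exact (continuousOn_tsum (s := {y | ∀ i, ‖f i y‖ ≤ u i}) (fun i ↦ (hf i).continuousOn) hu
    fun i y hy ↦ hy i).continuousAt hfu

theorem hasFDerivAt_tsum_of_eventually_nhds {f : ι → E → F} {f' : ι → E → E →L[𝕜] F} {x : E}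
    (hf : ∀ i y, HasFDerivAt (f i) (f' i y) y) (hsum : Summable fun i ↦ f i x) {u : ι → ℝ}
    (hu : Summable u) (hfu : ∀ᶠ y in 𝓝 x, ∀ i, ‖f' i y‖ ≤ u i) :
    HasFDerivAt (fun y ↦ ∑' i, f i y) (∑' i, f' i x) x := by
  obtain ⟨ε, hε, hball⟩ := Metric.eventually_nhds_iff_ball.1 hfu
  let _ : NormedSpace ℝ E := NormedSpace.restrictScalars ℝ 𝕜 E
  exact hasFDerivAt_tsum_of_isPreconnected hu Metric.isOpen_ball
    (convex_ball x ε).isPreconnected (fun i y _ ↦ hf i y) (fun i y hy ↦ hball y hy i)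
    (Metric.mem_ball_self hε) hsum (Metric.mem_ball_self hε)

theorem contDiff_tsum_of_eventually_nhds {N : ℕ∞} {f : ι → E → F}
    (hf : ∀ i, ContDiff 𝕜 N (f i))
    (hfu : ∀ k : ℕ, k ≤ N → ∀ x, ∃ u : ι → ℝ, Summable u ∧
      ∀ᶠ y in 𝓝 x, ∀ i, ‖iteratedFDeriv 𝕜 k (f i) y‖ ≤ u i) :
    ContDiff 𝕜 N fun x ↦ ∑' i, f i x := by
  have hsum (k : ℕ) (hk : k ≤ N) (x : E) : Summable fun i ↦ iteratedFDeriv 𝕜 k (f i) x := by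
    obtain ⟨u, hu, hfu⟩ := hfu k hk x
    exact .of_norm_bounded hu hfu.self_of_nhds
  have htaylor : HasFTaylorSeriesUpTo N (fun x ↦ ∑' i, f i x)
      fun x k ↦ ∑' i, iteratedFDeriv 𝕜 k (f i) x := by
    refine ⟨fun x ↦ ?_, fun k hk x ↦ ?_, fun k hk ↦ ?_⟩
    · exact (continuousMultilinearCurryFin0 𝕜 E F).toContinuousLinearEquiv.map_tsum
    · have hk' : ((k + 1 : ℕ) : ℕ∞) ≤ N := by
        exact_mod_cast Order.add_one_le_of_lt (WithTop.coe_lt_coe.1 hk)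
      obtain ⟨u, hu, hfu⟩ := hfu (k + 1) hk' x
      rw [show (∑' i, iteratedFDeriv 𝕜 (k + 1) (f i) x).curryLeft =
          ∑' i, (iteratedFDeriv 𝕜 (k + 1) (f i) x).curryLeft from
        (continuousMultilinearCurryLeftEquiv 𝕜 (fun _ ↦ E) F).toContinuousLinearEquiv.map_tsum]
      exact hasFDerivAt_tsum_of_eventually_nhds
        (f' := fun i y ↦ (iteratedFDeriv 𝕜 (k + 1) (f i) y).curryLeft)
        (fun i ↦ (contDiff_iff_ftaylorSeries.1 (hf i)).fderiv k hk)
        (hsum k (by exact_mod_cast hk.le) x) hu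
        (by simpa only [ContinuousMultilinearMap.curryLeft_norm] using hfu)
    · exact continuous_tsum_of_eventually_nhds
        (fun i ↦ (hf i).continuous_iteratedFDeriv hk) (hfu k (by exact_mod_cast hk))
  exact htaylor.contDiff

end Series

section StrongConvexity

variable {E : Type*} [NormedAddCommGroup E] {f : E → ℝ} {m : ℝ}

section NormedSpace

variable [NormedSpace ℝ E]

theorem add_fderiv_add_le_of_strongConvexOn {s : Set E} (hf : StrongConvexOn s m f) {x y : E}
    (hx : x ∈ s) (hy : y ∈ s) (hd : DifferentiableAt ℝ f x) :
    f x + fderiv ℝ f x (y - x) + m / 2 * ‖y - x‖ ^ 2 ≤ f y := by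
  have hslope := (hd.hasFDerivAt.hasLineDerivAt (y - x)).tendsto_slope_zero_right
  have hbound : Tendsto (fun t : ℝ ↦ f y - f x - (1 - t) * (m / 2 * ‖y - x‖ ^ 2)) (𝓝[>] 0)
      (𝓝 (f y - f x - (1 - 0) * (m / 2 * ‖y - x‖ ^ 2))) :=
    tendsto_nhdsWithin_of_tendsto_nhds (Continuous.tendsto (by fun_prop) 0)
  have hle : ∀ᶠ t : ℝ in 𝓝[>] 0, t⁻¹ • (f (x + t • (y - x)) - f x) ≤
      f y - f x - (1 - t) * (m / 2 * ‖y - x‖ ^ 2) := by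
    filter_upwards [Ioo_mem_nhdsGT one_pos] with t ⟨ht₀, ht₁⟩
    have hconv := hf.2 hy hx ht₀.le (sub_nonneg.2 ht₁.le) (add_sub_cancel t 1)
    rw [show t • y + (1 - t) • x = x + t • (y - x) by module] at hconv
    rw [smul_eq_mul, inv_mul_le_iff₀ ht₀]
    simp only [smul_eq_mul] at hconv
    linarith
  linarith [le_of_tendsto_of_tendsto hslope hbound hle]

theorem mul_norm_sub_sq_le_fderiv_sub_of_strongConvexOn {s : Set E} (hf : StrongConvexOn s m f)
    {x y : E} (hx : x ∈ s) (hy : y ∈ s) (hdx : DifferentiableAt ℝ f x)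
    (hdy : DifferentiableAt ℝ f y) :
    m * ‖x - y‖ ^ 2 ≤ (fderiv ℝ f x - fderiv ℝ f y) (x - y) := by
  have hxy := add_fderiv_add_le_of_strongConvexOn hf hx hy hdx
  have hyx := add_fderiv_add_le_of_strongConvexOn hf hy hx hdy
  rw [← neg_sub x y, map_neg, norm_neg] at hxy
  rw [sub_apply]
  linarith

theorem isCoercive_fderiv_fderiv_of_strongConvexOn (hm : 0 < m) (hf : StrongConvexOn univ m f)
    (hd : Differentiable ℝ f) {x : E} (hdx : DifferentiableAt ℝ (fderiv ℝ f) x) :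
    IsCoercive (fderiv ℝ (fderiv ℝ f) x) := by
  refine ⟨m, hm, fun v ↦ ?_⟩
  have hslope := (hdx.hasFDerivAt.hasLineDerivAt v).tendsto_slope_zero_right
  refine ge_of_tendsto ((ContinuousLinearMap.apply ℝ ℝ v).continuous.tendsto _ |>.comp hslope) ?_
  filter_upwards [self_mem_nhdsWithin] with t (ht : 0 < t)
  have hmono := mul_norm_sub_sq_le_fderiv_sub_of_strongConvexOn hf (mem_univ (x + t • v))
    (mem_univ x) (hd _) (hd _)
  rw [add_sub_cancel_left, map_smul, norm_smul, Real.norm_of_nonneg ht.le, smul_eq_mul] at hmono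
  simp only [Function.comp_apply, ContinuousLinearMap.apply_apply, smul_apply, smul_eq_mul]
  rw [le_inv_mul_iff₀ ht]
  nlinarith

end NormedSpace

theorem antilipschitzWith_gradient_of_strongConvexOn [InnerProductSpace ℝ E] [CompleteSpace E]
    (hm : 0 < m) (hf : StrongConvexOn univ m f) (hd : Differentiable ℝ f) :
    AntilipschitzWith m⁻¹.toNNReal (∇ f) := by
  refine AntilipschitzWith.of_le_mul_dist fun x y ↦ ?_
  have hmono : m * ‖x - y‖ ^ 2 ≤ ‖∇ f x - ∇ f y‖ * ‖x - y‖ :=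
    calc m * ‖x - y‖ ^ 2 ≤ (fderiv ℝ f x - fderiv ℝ f y) (x - y) :=
          mul_norm_sub_sq_le_fderiv_sub_of_strongConvexOn hf (mem_univ x) (mem_univ y) (hd x) (hd y)
      _ = ⟪∇ f x - ∇ f y, x - y⟫ := by
          rw [inner_sub_left, inner_gradient_left, inner_gradient_left, sub_apply]
      _ ≤ ‖∇ f x - ∇ f y‖ * ‖x - y‖ := real_inner_le_norm _ _
  rw [Real.coe_toNNReal _ (inv_nonneg.2 hm.le), dist_eq_norm, dist_eq_norm, le_inv_mul_iff₀ hm]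
  rcases (norm_nonneg (x - y)).eq_or_lt with h | h
  · simp [← h]
  · exact le_of_mul_le_mul_right (by linarith) h

end StrongConvexity

theorem isClosed_range_of_antilipschitzWith {α β : Type*} [PseudoEMetricSpace α]
    [CompleteSpace α] [EMetricSpace β] {K : NNReal} {f : α → β} (hf : AntilipschitzWith K f)
    (hc : Continuous f) :
    IsClosed (range f) := by
  refine isClosed_of_closure_subset fun y hy ↦ ?_
  obtain ⟨u, hu, huy⟩ := mem_closure_iff_seq_limit.1 hy
  choose v hv using hu
  obtain rfl : f ∘ v = u := funext hv
  have hcomap : Tendsto (Prod.map v v) atTop (comap (Prod.map f f) (uniformity β)) :=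
    tendsto_comap_iff.2 (cauchySeq_iff_tendsto.1 huy.cauchySeq)
  have hcauchy : CauchySeq v :=
    cauchySeq_iff_tendsto.2 (hcomap.mono_right hf.comap_uniformity_le)
  obtain ⟨x, hx⟩ := cauchySeq_tendsto_of_complete hcauchy
  exact ⟨x, tendsto_nhds_unique ((hc.tendsto x).comp hx) huy⟩

section Hyperregular

variable {X E : Type*} [NormedAddCommGroup X] [NormedSpace ℝ X]
  [NormedAddCommGroup E] [InnerProductSpace ℝ E] [CompleteSpace E] {h : X → E → ℝ}

/-- The fibre derivative (Legendre transformation) of a function on the trivial bundle `X × E`,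
with the dual fibres identified with `E` by the inner product. -/
def fibreDeriv (h : X → E → ℝ) (p : X × E) : X × E :=
  (p.1, ∇ (h p.1) p.2)

/-- A function on `X × E` is hyperregular if its fibre derivative is a `C^∞` diffeomorphism. -/
def IsHyperregular (h : X → E → ℝ) : Prop :=
  ∃ F : (X × E) ≃ (X × E), (∀ p, F p = fibreDeriv h p) ∧ ContDiff ℝ ∞ F ∧ ContDiff ℝ ∞ F.symm

theorem contDiff_gradient_snd {m n : ℕ∞ω} (hh : ContDiff ℝ m (Function.uncurry h))
    (hnm : n + 1 ≤ m) : ContDiff ℝ n fun p : X × E ↦ ∇ (h p.1) p.2 :=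
  (InnerProductSpace.toDual ℝ E).symm.contDiff.comp <|
    ContDiff.fderiv (f := fun p : X × E ↦ h p.1)
      (hh.comp ((contDiff_fst.comp contDiff_fst).prodMk contDiff_snd)) contDiff_snd hnm

theorem contDiff_fibreDeriv {m n : ℕ∞ω} (hh : ContDiff ℝ m (Function.uncurry h))
    (hnm : n + 1 ≤ m) : ContDiff ℝ n (fibreDeriv h) :=
  contDiff_fst.prodMk (contDiff_gradient_snd hh hnm)

theorem exists_hasFDerivAt_fibreDeriv (hh : ContDiff ℝ 2 (Function.uncurry h)) {p : X × E}
    (hcoer : IsCoercive (fderiv ℝ (fderiv ℝ (h p.1)) p.2)) :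
    ∃ e : (X × E) ≃L[ℝ] (X × E), HasFDerivAt (fibreDeriv h) (e : X × E →L[ℝ] X × E) p := by
  obtain ⟨A, hA⟩ := (contDiff_gradient_snd hh (n := 1) (by norm_num)).differentiable one_ne_zero p
  have hvert : HasFDerivAt (∇ (h p.1)) (A.comp (.inr ℝ X E)) p.2 :=
    HasFDerivAt.comp (g := fun q : X × E ↦ ∇ (h q.1) q.2) (f := Prod.mk p.1) p.2 hA
      (hasFDerivAt_prodMk_right p.1 p.2)
  have hAinr (v : E) : A (0, v) = hcoer.continuousLinearEquivOfBilin v := by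
    refine hcoer.unique_continuousLinearEquivOfBilin fun w ↦ ?_
    have hdual : fderiv ℝ (h p.1) = InnerProductSpace.toDual ℝ E ∘ ∇ (h p.1) :=
      funext fun ξ ↦ ((InnerProductSpace.toDual ℝ E).apply_symm_apply _).symm
    rw [hdual, ((InnerProductSpace.toDual ℝ E).hasFDerivAt.comp p.2 hvert).fderiv]
    rfl
  refine ⟨(ContinuousLinearEquiv.refl ℝ X).skewProd hcoer.continuousLinearEquivOfBilin
    (A.comp (.inl ℝ X E)), (hasFDerivAt_fst.prodMk hA).congr_fderiv ?_⟩
  ext v <;> simp [hAinr]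

theorem bijective_fibreDeriv {X : Type*} [TopologicalSpace X] {h : X → E → ℝ}
    (hopen : IsOpen (range (fibreDeriv h)))
    (hcont : ∀ x, Continuous (∇ (h x)))
    (hanti : ∀ x, ∃ K, AntilipschitzWith K (∇ (h x))) : Function.Bijective (fibreDeriv h) := by
  have hinj (x : X) : Function.Injective (∇ (h x)) := (hanti x).choose_spec.injective
  have hrange (x : X) : range (∇ (h x)) = Prod.mk x ⁻¹' range (fibreDeriv h) := by
    ext w
    simp [fibreDeriv]
  have hsurj (x : X) : range (∇ (h x)) = univ := by
    have hclosed := isClosed_range_of_antilipschitzWith (hanti x).choose_spec (hcont x)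
    have hopen' : IsOpen (range (∇ (h x))) := hrange x ▸ hopen.preimage (by fun_prop)
    exact IsClopen.eq_univ ⟨hclosed, hopen'⟩ (range_nonempty _)
  refine ⟨?_, fun ⟨x, w⟩ ↦ ?_⟩
  · rintro ⟨x, ξ⟩ ⟨y, ζ⟩ heq
    obtain ⟨rfl, hgrad⟩ := Prod.mk.inj heq
    exact congrArg _ (hinj x hgrad)
  · rw [← mem_range, ← mem_preimage, ← hrange, hsurj]
    trivial

theorem isHyperregular_of_strongConvexOn [CompleteSpace X]
    (hh : ContDiff ℝ ∞ (Function.uncurry h))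
    (hconv : ∀ x, ∃ m > 0, StrongConvexOn univ m (h x)) : IsHyperregular h := by
  have hfibre (x : X) : ContDiff ℝ ∞ (h x) := hh.comp (contDiff_prodMk_right x)
  have hd (x : X) : Differentiable ℝ (h x) := (hfibre x).differentiable (by simp)
  have hF : ContDiff ℝ ∞ (fibreDeriv h) := contDiff_fibreDeriv hh (by simp)
  have hcoer (p : X × E) : IsCoercive (fderiv ℝ (fderiv ℝ (h p.1)) p.2) := by
    obtain ⟨m, hm, hconv⟩ := hconv p.1
    exact isCoercive_fderiv_fderiv_of_strongConvexOn hm hconv (hd _)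
      (((hfibre p.1).fderiv_right (m := ∞) (by simp)).differentiable (by simp) _)
  choose F' hF' using fun p ↦
    exists_hasFDerivAt_fibreDeriv (mod_cast contDiff_infty.1 hh 2) (hcoer p)
  have hopen : IsOpenMap (fibreDeriv h) :=
    isOpenMap_of_hasStrictFDerivAt_equiv fun p ↦
      hF.contDiffAt.hasStrictFDerivAt' (hF' p) (by simp)
  have hbij : Function.Bijective (fibreDeriv h) := by
    refine bijective_fibreDeriv hopen.isOpen_range (fun x ↦ ?_) fun x ↦ ?_
    · exact (contDiff_snd.comp (hF.comp (contDiff_prodMk_right x))).continuous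
    · obtain ⟨m, hm, hconv⟩ := hconv x
      exact ⟨_, antilipschitzWith_gradient_of_strongConvexOn hm hconv (hd x)⟩
  let F := (Equiv.ofBijective _ hbij).toHomeomorphOfContinuousOpen hF.continuous hopen
  exact ⟨F.toEquiv, fun _ ↦ rfl, hF, F.contDiff_symm hF' hF⟩

end Hyperregular

section CompCLM

variable {𝕜 E F G : Type*} [NontriviallyNormedField 𝕜] [NormedAddCommGroup E] [NormedSpace 𝕜 E]
  [NormedAddCommGroup F] [NormedSpace 𝕜 F] [NormedAddCommGroup G] [NormedSpace 𝕜 G]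
  {f : E → F} {n : ℕ}

theorem norm_iteratedFDeriv_comp_clm_le (g : G →L[𝕜] E) (hf : ContDiff 𝕜 n f) (x : G) :
    ‖iteratedFDeriv 𝕜 n (f ∘ g) x‖ ≤ ‖iteratedFDeriv 𝕜 n f (g x)‖ * ‖g‖ ^ n := by
  rw [g.iteratedFDeriv_comp_right hf x le_rfl]
  simpa using ContinuousMultilinearMap.norm_compContinuousLinearMap_le
    (iteratedFDeriv 𝕜 n f (g x)) fun _ ↦ g

theorem norm_iteratedFDeriv_comp_clm_le_of_norm_le_one {g : G →L[𝕜] E} (hg : ‖g‖ ≤ 1)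
    (hf : ContDiff 𝕜 n f) (x : G) :
    ‖iteratedFDeriv 𝕜 n (f ∘ g) x‖ ≤ ‖iteratedFDeriv 𝕜 n f (g x)‖ :=
  (norm_iteratedFDeriv_comp_clm_le g hf x).trans <|
    mul_le_of_le_one_right (norm_nonneg _) (pow_le_one₀ (norm_nonneg _) hg)

end CompCLM

section Cosh

theorem cosh_le_exp_abs (t : ℝ) : Real.cosh t ≤ Real.exp |t| := by
  rw [← Real.cosh_abs, Real.cosh_eq]
  have : Real.exp (-|t|) ≤ Real.exp |t| := Real.exp_le_exp.2 (neg_le_self (abs_nonneg t))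
  linarith

theorem norm_iteratedDeriv_cosh_le (n : ℕ) (t : ℝ) :
    ‖iteratedDeriv n Real.cosh t‖ ≤ Real.exp |t| := by
  refine le_trans ?_ (cosh_le_exp_abs t)
  obtain ⟨k, rfl | rfl⟩ := n.even_or_odd'
  · rw [Real.iteratedDeriv_even_cosh, Real.norm_of_nonneg (Real.cosh_pos t).le]
  · rw [Real.iteratedDeriv_odd_cosh, Real.norm_eq_abs, Real.abs_sinh, ← Real.cosh_abs]
    exact (Real.sinh_lt_cosh _).le

theorem strongConvexOn_cosh : StrongConvexOn univ 1 Real.cosh := by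
  have hderiv (t : ℝ) : HasDerivAt (fun t ↦ Real.cosh t - 1 / 2 * ‖t‖ ^ 2) (Real.sinh t - t) t := by
    have hsq := (Real.hasDerivAt_cosh t).fun_sub ((hasDerivAt_pow 2 t).const_mul (1 / 2))
    simp only [Real.norm_eq_abs, sq_abs]
    exact hsq.congr_deriv (by ring)
  refine strongConvexOn_iff_convex.2 (Monotone.convexOn_univ_of_deriv
    (fun t ↦ (hderiv t).differentiableAt) ?_)
  rw [funext fun t ↦ (hderiv t).deriv]
  exact Real.sinh_sub_id_strictMono.monotone

variable {E F : Type*} [NormedAddCommGroup E] [InnerProductSpace ℝ E]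
  [NormedAddCommGroup F] [NormedSpace ℝ F]

theorem abs_inner_le_mul_norm_of_norm_le {R : ℝ} {ξ : E} (hξ : ‖ξ‖ ≤ R) (z : E) :
    |⟪z, ξ⟫| ≤ R * ‖z‖ :=
  (abs_real_inner_le_norm z ξ).trans <| by rw [mul_comm]; gcongr

theorem cosh_inner_le_exp {R : ℝ} {ξ : E} (hξ : ‖ξ‖ ≤ R) (z : E) :
    Real.cosh ⟪z, ξ⟫ ≤ Real.exp (R * ‖z‖) :=
  (cosh_le_exp_abs _).trans <| Real.exp_le_exp.2 <| abs_inner_le_mul_norm_of_norm_le hξ z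

theorem inner_sq_le_exp {R : ℝ} {ξ : E} (hξ : ‖ξ‖ ≤ R) (z : E) :
    ⟪z, ξ⟫ ^ 2 ≤ 2 * Real.exp (R * ‖z‖) := by
  have hexp := Real.pow_div_factorial_le_exp |⟪z, ξ⟫| (abs_nonneg _) 2
  rw [sq_abs, Nat.factorial_two, Nat.cast_two, div_le_iff₀' two_pos] at hexp
  refine hexp.trans ?_
  gcongr
  exact abs_inner_le_mul_norm_of_norm_le hξ z

theorem contDiff_cosh_inner {n : ℕ∞ω} (z : E) : ContDiff ℝ n fun ξ ↦ Real.cosh ⟪z, ξ⟫ :=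
  Real.contDiff_cosh.comp (innerSL ℝ z).contDiff

theorem norm_iteratedFDeriv_cosh_inner_le {R : ℝ} {ξ : E} (hξ : ‖ξ‖ ≤ R) (z : E) (n : ℕ) :
    ‖iteratedFDeriv ℝ n (fun ξ ↦ Real.cosh ⟪z, ξ⟫) ξ‖ ≤ n ! * Real.exp ((R + 1) * ‖z‖) := by
  have hpow : ‖z‖ ^ n ≤ n ! * Real.exp ‖z‖ := by
    rw [← div_le_iff₀' (by positivity)]
    exact Real.pow_div_factorial_le_exp _ (norm_nonneg z) n
  calc ‖iteratedFDeriv ℝ n (fun ξ ↦ Real.cosh ⟪z, ξ⟫) ξ‖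
      ≤ ‖iteratedFDeriv ℝ n Real.cosh ⟪z, ξ⟫‖ * ‖innerSL ℝ z‖ ^ n :=
        norm_iteratedFDeriv_comp_clm_le (innerSL ℝ z) Real.contDiff_cosh ξ
    _ = ‖iteratedDeriv n Real.cosh ⟪z, ξ⟫‖ * ‖z‖ ^ n := by
        rw [norm_iteratedFDeriv_eq_norm_iteratedDeriv, innerSL_apply_norm]
    _ ≤ Real.exp |⟪z, ξ⟫| * (n ! * Real.exp ‖z‖) := by
        gcongr
        exact norm_iteratedDeriv_cosh_le n _
    _ ≤ Real.exp (R * ‖z‖) * (n ! * Real.exp ‖z‖) := by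
        gcongr
        exact abs_inner_le_mul_norm_of_norm_le hξ z
    _ = n ! * Real.exp ((R + 1) * ‖z‖) := by rw [add_mul, one_mul, Real.exp_add]; ring

theorem norm_iteratedFDeriv_mul_cosh_inner_le {a : F → ℝ} {n : ℕ} (ha : ContDiff ℝ n a) {R : ℝ}
    {p : F × E} (hp : ‖p.2‖ ≤ R) (z : E) :
    ‖iteratedFDeriv ℝ n (fun p : F × E ↦ a p.1 * Real.cosh ⟪z, p.2⟫) p‖ ≤
      ∑ k ∈ Finset.range (n + 1), (n.choose k * (n - k)! : ℝ) *
        (Real.exp ((R + 1) * ‖z‖) * ‖iteratedFDeriv ℝ k a p.1‖) := by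
  refine (norm_iteratedFDeriv_mul_le (ha.comp contDiff_fst)
    ((contDiff_cosh_inner z).comp contDiff_snd) p le_rfl).trans (Finset.sum_le_sum fun k hk ↦ ?_)
  have hkn : (k : ℕ∞ω) ≤ n := by exact_mod_cast Finset.mem_range_succ_iff.1 hk
  have hleft : ‖iteratedFDeriv ℝ k (a ∘ Prod.fst) p‖ ≤ ‖iteratedFDeriv ℝ k a p.1‖ :=
    norm_iteratedFDeriv_comp_clm_le_of_norm_le_one (ContinuousLinearMap.norm_fst_le ℝ F E)
      (ha.of_le hkn) p
  have hright : ‖iteratedFDeriv ℝ (n - k) ((fun ξ ↦ Real.cosh ⟪z, ξ⟫) ∘ Prod.snd) p‖ ≤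
      (n - k)! * Real.exp ((R + 1) * ‖z‖) :=
    (norm_iteratedFDeriv_comp_clm_le_of_norm_le_one (ContinuousLinearMap.norm_snd_le ℝ F E)
      (contDiff_cosh_inner z) p).trans (norm_iteratedFDeriv_cosh_inner_le hp z _)
  calc (n.choose k : ℝ) * ‖iteratedFDeriv ℝ k (a ∘ Prod.fst) p‖ *
        ‖iteratedFDeriv ℝ (n - k) ((fun ξ ↦ Real.cosh ⟪z, ξ⟫) ∘ Prod.snd) p‖
      ≤ n.choose k * ‖iteratedFDeriv ℝ k a p.1‖ * ((n - k)! * Real.exp ((R + 1) * ‖z‖)) := by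
        gcongr
    _ = _ := by ring

end Cosh

theorem eventually_norm_le_norm_add_one {E : Type*} [SeminormedAddCommGroup E] (v : E) :
    ∀ᶠ w in 𝓝 v, ‖w‖ ≤ ‖v‖ + 1 :=
  (continuous_norm.tendsto v).eventually_le_const (lt_add_one _)

section CoshSeries

variable {ι X E : Type*} [NormedAddCommGroup X] [NormedSpace ℝ X] [NormedAddCommGroup E]

/-- The family `α` is summable against every exponential weight `e ^ (c * ‖z i‖)`. -/
def ExpSummable (z : ι → E) (α : ι → ℝ) : Prop :=
  ∀ c > 0, Summable fun i ↦ Real.exp (c * ‖z i‖) * |α i|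

/-- All derivatives of the functions `a i` are, locally uniformly, summable against every
exponential weight `e ^ (c * ‖z i‖)`. Bounds near each point replace bounds on compact sets, so
that the notion is meaningful when `X` is not locally compact. -/
def LocallyExpSummable (z : ι → E) (a : ι → X → ℝ) : Prop :=
  ∀ c > 0, ∀ (n : ℕ) (x : X), ∃ M : ι → ℝ, Summable (fun i ↦ Real.exp (c * ‖z i‖) * M i) ∧
    ∀ᶠ y in 𝓝 x, ∀ i, ‖iteratedFDeriv ℝ n (a i) y‖ ≤ M i

variable {z : ι → E} {α : ι → ℝ} {a : ι → X → ℝ}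

theorem LocallyExpSummable.expSummable (ha : LocallyExpSummable z a) (x : X) :
    ExpSummable z fun i ↦ a i x := fun c hc ↦ by
  obtain ⟨M, hM, haM⟩ := ha c hc 0 x
  refine hM.of_nonneg_of_le (fun i ↦ by positivity) fun i ↦ ?_
  gcongr
  simpa only [norm_iteratedFDeriv_zero, Real.norm_eq_abs] using haM.self_of_nhds i

theorem ExpSummable.neg (hα : ExpSummable z α) : ExpSummable z fun i ↦ -α i := by
  simpa only [ExpSummable, abs_neg] using hα

variable [InnerProductSpace ℝ E]

theorem ExpSummable.summable_mul_cosh_inner (hα : ExpSummable z α) (ξ : E) :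
    Summable fun i ↦ α i * Real.cosh ⟪z i, ξ⟫ := by
  refine .of_norm_bounded (hα (‖ξ‖ + 1) (by positivity)) fun i ↦ ?_
  rw [norm_mul, mul_comm, Real.norm_of_nonneg (Real.cosh_pos _).le, Real.norm_eq_abs]
  gcongr
  exact cosh_inner_le_exp (by linarith) (z i)

theorem norm_mul_inner_sq_le {R : ℝ} {ξ : E} (hξ : ‖ξ‖ ≤ R) (z : E) (α : ℝ) :
    ‖α * ⟪z, ξ⟫ ^ 2‖ ≤ 2 * (Real.exp (R * ‖z‖) * |α|) := by
  rw [norm_mul, mul_comm, Real.norm_of_nonneg (sq_nonneg _), Real.norm_eq_abs, ← mul_assoc]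
  gcongr
  exact inner_sq_le_exp hξ z

theorem ExpSummable.summable_mul_inner_sq (hα : ExpSummable z α) (v : E) :
    Summable fun i ↦ α i * ⟪z i, v⟫ ^ 2 :=
  .of_norm_bounded ((hα (‖v‖ + 1) (by positivity)).mul_left 2) fun i ↦
    norm_mul_inner_sq_le (by linarith) (z i) (α i)

theorem ExpSummable.continuous_tsum_mul_inner_sq (hα : ExpSummable z α) :
    Continuous fun v ↦ ∑' i, α i * ⟪z i, v⟫ ^ 2 := by
  refine continuous_tsum_of_eventually_nhds (fun i ↦ by fun_prop) fun v ↦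
    ⟨_, (hα (‖v‖ + 1) (by positivity)).mul_left 2, ?_⟩
  filter_upwards [eventually_norm_le_norm_add_one v] with w hw i
  exact norm_mul_inner_sq_le hw (z i) (α i)

theorem contDiff_tsum_mul_cosh_inner (ha : ∀ i, ContDiff ℝ ∞ (a i))
    (hsum : LocallyExpSummable z a) :
    ContDiff ℝ ∞ fun p : X × E ↦ ∑' i, a i p.1 * Real.cosh ⟪z i, p.2⟫ := by
  refine contDiff_tsum_of_eventually_nhds (fun i ↦ ((ha i).comp contDiff_fst).mul
    ((contDiff_cosh_inner (z i)).comp contDiff_snd)) fun n _ p ↦ ?_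
  choose M hM haM using fun k ↦ hsum (‖p.2‖ + 1 + 1) (by positivity) k p.1
  refine ⟨_, summable_sum fun k (_ : k ∈ Finset.range (n + 1)) ↦
    (hM k).mul_left (n.choose k * (n - k)! : ℝ), ?_⟩
  have hbound : ∀ᶠ q in 𝓝 p, ∀ k ∈ Finset.range (n + 1), ∀ i,
      ‖iteratedFDeriv ℝ k (a i) q.1‖ ≤ M k i :=
    (Filter.eventually_all_finset _).2 fun k _ ↦ continuous_fst.tendsto p (haM k)
  filter_upwards [hbound, continuous_snd.tendsto p (eventually_norm_le_norm_add_one p.2)]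
    with q hq hnorm i
  refine (norm_iteratedFDeriv_mul_cosh_inner_le (contDiff_infty.1 (ha i) n) hnorm (z i)).trans
    (Finset.sum_le_sum fun k hk ↦ ?_)
  gcongr
  exact hq k hk i

end CoshSeries

section CoshConvexity

theorem exists_pos_mul_norm_sq_le {E : Type*} [NormedAddCommGroup E] [NormedSpace ℝ E]
    [FiniteDimensional ℝ E] {q : E → ℝ} (hcont : Continuous q)
    (hhom : ∀ (t : ℝ) (v : E), q (t • v) = t ^ 2 * q v) (hpos : ∀ v ≠ 0, 0 < q v) :
    ∃ m > 0, ∀ v, m * ‖v‖ ^ 2 ≤ q v := by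
  obtain ⟨m, hm, hle⟩ := (isCompact_sphere (0 : E) 1).exists_forall_le' hcont.continuousOn
    fun v hv ↦ hpos v (ne_zero_of_mem_unit_sphere ⟨v, hv⟩)
  refine ⟨m, hm, fun v ↦ ?_⟩
  rcases eq_or_ne v 0 with rfl | hv
  · simpa using (hhom 0 0).ge
  · calc m * ‖v‖ ^ 2 ≤ q (‖v‖⁻¹ • v) * ‖v‖ ^ 2 := by
          gcongr
          exact hle _ (by simp [norm_smul, hv])
      _ = q (‖v‖ • ‖v‖⁻¹ • v) := by rw [hhom ‖v‖, mul_comm]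
      _ = q v := by rw [smul_inv_smul₀ (norm_ne_zero_iff.2 hv)]

variable {ι E : Type*} [NormedAddCommGroup E] [InnerProductSpace ℝ E]

theorem exists_inner_ne_zero_of_span_eq_top {s : Set E} (hs : Submodule.span ℝ s = ⊤) {v : E}
    (hv : v ≠ 0) : ∃ w ∈ s, ⟪w, v⟫ ≠ 0 := by
  by_contra! horth
  have hle : Submodule.span ℝ s ≤ (Submodule.span ℝ {v})ᗮ :=
    Submodule.span_le.2 fun w hw ↦ Submodule.mem_orthogonal_singleton_iff_inner_left.2 (horth w hw)
  exact hv <| inner_self_eq_zero.1 <|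
    Submodule.mem_orthogonal_singleton_iff_inner_left.1 <| hle <| hs ▸ Submodule.mem_top

variable {z : ι → E} {α : ι → ℝ}

theorem ExpSummable.tsum_mul_inner_sq_pos (hα : ExpSummable z α) (hnonneg : ∀ i, z i ≠ 0 → 0 ≤ α i)
    (hspan : Submodule.span ℝ (z '' {i | 0 < α i}) = ⊤) {v : E} (hv : v ≠ 0) :
    0 < ∑' i, α i * ⟪z i, v⟫ ^ 2 := by
  obtain ⟨_, ⟨i, hi, rfl⟩, hinner⟩ := exists_inner_ne_zero_of_span_eq_top hspan hv
  refine (hα.summable_mul_inner_sq v).tsum_pos (fun j ↦ ?_) i (mul_pos hi (by positivity))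
  rcases eq_or_ne (z j) 0 with hj | hj
  · simp [hj]
  · exact mul_nonneg (hnonneg j hj) (sq_nonneg _)

theorem mul_cosh_inner_le {z : E} {α : ℝ} (hα : z ≠ 0 → 0 ≤ α) (ξ ζ : E) {s t : ℝ} (hs : 0 ≤ s)
    (ht : 0 ≤ t) (hst : s + t = 1) :
    α * Real.cosh ⟪z, s • ξ + t • ζ⟫ ≤ s * (α * Real.cosh ⟪z, ξ⟫) + t * (α * Real.cosh ⟪z, ζ⟫) -
      s * t / 2 * (α * ⟪z, ξ - ζ⟫ ^ 2) := by
  rcases eq_or_ne z 0 with rfl | hz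
  · simp [← add_mul, hst]
  · have hcosh := strongConvexOn_cosh.2 (mem_univ ⟪z, ξ⟫) (mem_univ ⟪z, ζ⟫) hs ht hst
    rw [inner_add_right, inner_smul_right, inner_smul_right, inner_sub_right]
    simp only [smul_eq_mul, Real.norm_eq_abs, sq_abs] at hcosh
    linarith [mul_le_mul_of_nonneg_left hcosh (hα hz)]

theorem ExpSummable.strongConvexOn_tsum_mul_cosh_inner (hα : ExpSummable z α)
    (hnonneg : ∀ i, z i ≠ 0 → 0 ≤ α i) {m : ℝ}
    (hm : ∀ v, m * ‖v‖ ^ 2 ≤ ∑' i, α i * ⟪z i, v⟫ ^ 2) :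
    StrongConvexOn univ m fun ξ ↦ ∑' i, α i * Real.cosh ⟪z i, ξ⟫ := by
  refine ⟨convex_univ, fun ξ _ ζ _ s t hs ht hst ↦ ?_⟩
  have hcosh (ξ : E) := (hα.summable_mul_cosh_inner ξ).hasSum
  have hsq := (hα.summable_mul_inner_sq (ξ - ζ)).hasSum
  have hle := hasSum_le (fun i ↦ mul_cosh_inner_le (hnonneg i) ξ ζ hs ht hst) (hcosh _)
    ((((hcosh ξ).mul_left s).add ((hcosh ζ).mul_left t)).sub (hsq.mul_left (s * t / 2)))
  have hquad := mul_le_mul_of_nonneg_left (hm (ξ - ζ)) (by positivity : 0 ≤ s * t / 2)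
  simp only [smul_eq_mul]
  linarith

theorem ExpSummable.exists_strongConvexOn_tsum_mul_cosh_inner [FiniteDimensional ℝ E]
    (hα : ExpSummable z α) (hnonneg : ∀ i, z i ≠ 0 → 0 ≤ α i)
    (hspan : Submodule.span ℝ (z '' {i | 0 < α i}) = ⊤) :
    ∃ m > 0, StrongConvexOn univ m fun ξ ↦ ∑' i, α i * Real.cosh ⟪z i, ξ⟫ := by
  obtain ⟨m, hm, hle⟩ := exists_pos_mul_norm_sq_le hα.continuous_tsum_mul_inner_sq
    (fun t v ↦ by
      rw [← tsum_mul_left]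
      exact tsum_congr fun i ↦ by rw [inner_smul_right]; ring)
    fun _ ↦ hα.tsum_mul_inner_sq_pos hnonneg hspan
  exact ⟨m, hm, hα.strongConvexOn_tsum_mul_cosh_inner hnonneg hle⟩

end CoshConvexity

section Hamiltonian

variable {ι X E : Type*} [NormedAddCommGroup E] [InnerProductSpace ℝ E]

/-- The Hamilton function `h̃₀(x, ξ) = -∑ a i x cosh ⟪z i, ξ⟫ - V₀ x` of a hopping operator with
kinetic coefficients `a i` in the directions `z i` and potential `V₀`. -/
def hamiltonian (z : ι → E) (a : ι → X → ℝ) (V₀ : X → ℝ) (x : X) (ξ : E) : ℝ :=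
  -(∑' i, a i x * Real.cosh ⟪z i, ξ⟫) - V₀ x

variable {z : ι → E} {a : ι → X → ℝ} {V₀ : X → ℝ}

theorem hamiltonian_neg (x : X) (ξ : E) : hamiltonian z a V₀ x (-ξ) = hamiltonian z a V₀ x ξ := by
  simp only [hamiltonian, inner_neg_right, Real.cosh_neg]

theorem exists_strongConvexOn_hamiltonian [FiniteDimensional ℝ E] {x : X}
    (hneg : ∀ i, z i ≠ 0 → a i x ≤ 0) (hspan : Submodule.span ℝ (z '' {i | a i x < 0}) = ⊤)
    (hsum : ExpSummable z fun i ↦ a i x) :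
    ∃ m > 0, StrongConvexOn univ m (hamiltonian z a V₀ x) := by
  obtain ⟨m, hm, hconv⟩ := hsum.neg.exists_strongConvexOn_tsum_mul_cosh_inner
    (fun i hi ↦ neg_nonneg.2 (hneg i hi)) (by simpa only [neg_pos] using hspan)
  have heq : hamiltonian z a V₀ x =
      (fun ξ ↦ ∑' i, -a i x * Real.cosh ⟪z i, ξ⟫) + fun _ ↦ -V₀ x := by
    ext ξ
    simp only [hamiltonian, Pi.add_apply, neg_mul, tsum_neg, sub_eq_add_neg]
  have hadd := hconv.add (uniformConvexOn_zero.2 (convexOn_const (-V₀ x) convex_univ))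
  rw [add_zero, ← heq] at hadd
  exact ⟨m, hm, hadd⟩

variable [NormedAddCommGroup X] [NormedSpace ℝ X]

theorem contDiff_hamiltonian (ha : ∀ i, ContDiff ℝ ∞ (a i)) (hsum : LocallyExpSummable z a)
    (hV : ContDiff ℝ ∞ V₀) : ContDiff ℝ ∞ (Function.uncurry (hamiltonian z a V₀)) :=
  (contDiff_tsum_mul_cosh_inner ha hsum).neg.sub (hV.comp contDiff_fst)

theorem stmt12_general [CompleteSpace X] [FiniteDimensional ℝ E] (ha : ∀ i, ContDiff ℝ ∞ (a i))
    (hneg : ∀ i, z i ≠ 0 → ∀ x, a i x ≤ 0)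
    (hspan : ∀ x, Submodule.span ℝ (z '' {i | a i x < 0}) = ⊤)
    (hsum : LocallyExpSummable z a) (hV : ContDiff ℝ ∞ V₀) :
    ContDiff ℝ ∞ (Function.uncurry (hamiltonian z a V₀)) ∧
    (∀ x ξ, hamiltonian z a V₀ x ξ = hamiltonian z a V₀ x (-ξ)) ∧
    (∀ x, StrictConvexOn ℝ univ (hamiltonian z a V₀ x)) ∧
    IsHyperregular (hamiltonian z a V₀) := by
  have hsmooth := contDiff_hamiltonian ha hsum hV
  have hconv (x : X) : ∃ m > 0, StrongConvexOn univ m (hamiltonian z a V₀ x) :=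
    exists_strongConvexOn_hamiltonian (fun i hi ↦ hneg i hi x) (hspan x) (hsum.expSummable x)
  refine ⟨hsmooth, fun x ξ ↦ (hamiltonian_neg x ξ).symm, fun x ↦ ?_,
    isHyperregular_of_strongConvexOn hsmooth hconv⟩
  obtain ⟨m, hm, hconv⟩ := hconv x
  exact hconv.strictConvexOn hm

end Hamiltonian

theorem zv_zero {d : ℕ} : zv (0 : Fin d → ℤ) = 0 := by
  ext
  simp [zv]

theorem locallyExpSummable_of_forall_isCompact {ι X E : Type*} [NormedAddCommGroup X]
    [NormedSpace ℝ X] [LocallyCompactSpace X] [NormedAddCommGroup E] {z : ι → E} {a : ι → X → ℝ}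
    (h : ∀ c > 0, ∀ K : Set X, IsCompact K → ∀ n : ℕ, ∃ M : ι → ℝ,
      (∀ i, ∀ x ∈ K, ‖iteratedFDeriv ℝ n (a i) x‖ ≤ M i) ∧
        Summable fun i ↦ Real.exp (c * ‖z i‖) * M i) : LocallyExpSummable z a := fun c hc n x ↦ by
  obtain ⟨K, hK, hKx⟩ := exists_compact_mem_nhds x
  obtain ⟨M, haM, hM⟩ := h c hc K hK n
  exact ⟨M, hM, mem_of_superset hKx fun y hy i ↦ haM i y hy⟩

/-- Corollary 2.18: the Hamilton function `h̃₀(x,ξ) = -Σ_η ã_η(x) cosh(η·ξ) - V₀(x)` is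
smooth, even and strictly convex in each fibre, and hyperregular: its fibre derivative
`(x,ξ) ↦ (x, ∇_ξ h̃₀(x,ξ))` is a smooth diffeomorphism of `ℝ^{2d}`. -/
theorem stmt12 (d : ℕ) (a : (Fin d → ℤ) → Ed d → ℝ) (V₀ : Ed d → ℝ)
    (hsm : ∀ η : Fin d → ℤ, ContDiff ℝ (⊤ : ℕ∞) (a η))
    (hneg : ∀ η : Fin d → ℤ, η ≠ 0 → ∀ x : Ed d, a η x ≤ 0)
    (heven : ∀ (η : Fin d → ℤ) (x : Ed d), a η x = a (-η) x)
    (hspan : ∀ x : Ed d,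
      Submodule.span ℝ {w : Ed d | ∃ η : Fin d → ℤ, a η x < 0 ∧ w = zv η} = ⊤)
    (hdecay : ∀ c : ℝ, 0 < c → ∀ K : Set (Ed d), IsCompact K → ∀ n : ℕ,
      ∃ M : (Fin d → ℤ) → ℝ,
        (∀ η : Fin d → ℤ, ∀ x ∈ K, ‖iteratedFDeriv ℝ n (a η) x‖ ≤ M η) ∧
        Summable (fun η : Fin d → ℤ => Real.exp (c * ‖zv η‖) * M η))
    (hV : ContDiff ℝ (⊤ : ℕ∞) V₀)
    (h0 : Ed d → Ed d → ℝ)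
    (hh0 : ∀ x ξ : Ed d,
      h0 x ξ = -(∑' η : Fin d → ℤ, a η x * Real.cosh ⟪zv η, ξ⟫) - V₀ x) :
    ContDiff ℝ (⊤ : ℕ∞) (fun p : Ed d × Ed d => h0 p.1 p.2)
    ∧ (∀ x ξ : Ed d, h0 x ξ = h0 x (-ξ))
    ∧ (∀ x : Ed d, StrictConvexOn ℝ Set.univ (h0 x))
    ∧ ∃ F : (Ed d × Ed d) ≃ (Ed d × Ed d),
        (∀ p : Ed d × Ed d, F p = (p.1, gradient (h0 p.1) p.2)) ∧
        ContDiff ℝ (⊤ : ℕ∞) ⇑F ∧ ContDiff ℝ (⊤ : ℕ∞) ⇑F.symm := by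
  obtain rfl : h0 = hamiltonian zv a V₀ := funext₂ hh0
  exact stmt12_general hsm (fun η hη ↦ hneg η fun h ↦ hη (h ▸ zv_zero))
    (by simpa only [image, mem_ofPred_eq, eq_comm] using hspan)
    (locallyExpSummable_of_forall_isCompact hdecay) hV
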